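/- arXiv:2102.07394 — 2 statements merged into one kernel-verified Lean document; each statement's English description precedes it below -/
import Mathlib

section
/- Let (l,m,k) be an admissible triple with r = (l+m−k)/2. Then, as N → ∞, |√(([k+1]_{q(N)}·N^r)/θ_{q(N)}(k,l,m)) − 1| = O(N^{−1}). -/
open scoped BigOperators
open Asymptotics Filter

/-- `q(N) = 2/(N + √(N²−4))`, so that `0 < q ≤ 1` and `q + q⁻¹ = N` for `N ≥ 2`. -/
noncomputable def qpar (N : ℕ) : ℝ := 2 / (N + Real.sqrt ((N : ℝ) ^ 2 - 4))

/-- The quantum integer `[n]_q = q^{n−1} + q^{n−3} + ⋯ + q^{−(n−1)}` (and `[0]_q = 0`). -/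
noncomputable def qint (N n : ℕ) : ℝ :=
  ∑ j ∈ Finset.range n, qpar N ^ ((n : ℤ) - 1 - 2 * (j : ℤ))

/-- The quantum factorial `[n]_q! = [n]_q·[n−1]_q·⋯·[1]_q`, with `[0]_q! = 1`. -/
noncomputable def qfact (N n : ℕ) : ℝ := ∏ i ∈ Finset.range n, qint N (i + 1)

/-- The theta-net `θ_q(k,l,m)` of an admissible triple, with `r = (l+m−k)/2`. -/
noncomputable def thetaNet (N k l m r : ℕ) : ℝ :=
  (qfact N r * qfact N (l - r) * qfact N (m - r) * qfact N (k + r + 1)) /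
    (qfact N l * qfact N m * qfact N k)

theorem qpar_aux (N : ℕ) (hN : 2 ≤ N) : 0 < qpar N ∧ qpar N + (qpar N)⁻¹ = N := by
  have h2 : (2 : ℝ) ≤ N := by exact_mod_cast hN
  have hs : Real.sqrt ((N : ℝ) ^ 2 - 4) ^ 2 = (N : ℝ) ^ 2 - 4 := Real.sq_sqrt (by nlinarith)
  have h0 := Real.sqrt_nonneg ((N : ℝ) ^ 2 - 4)
  unfold qpar
  set s := Real.sqrt ((N : ℝ) ^ 2 - 4)
  have hp : 0 < (N : ℝ) + s := by linarith
  refine ⟨by positivity, ?_⟩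
  field_simp
  nlinarith

theorem qint_rec (N n : ℕ) (hN : 2 ≤ N) :
    qint N (n + 2) = N * qint N (n + 1) - qint N n := by
  obtain ⟨hq, hqN⟩ := qpar_aux N hN
  have hne := hq.ne'
  rw [← hqN]
  unfold qint
  rw [add_mul, Finset.mul_sum, Finset.mul_sum, Finset.sum_range_succ _ (n + 1),
    Finset.sum_range_succ (fun j : ℕ => (qpar N)⁻¹ * _) n]
  have e1 : ∀ j : ℕ, qpar N * qpar N ^ (((n + 1 : ℕ) : ℤ) - 1 - 2 * (j : ℤ))
      = qpar N ^ (((n + 2 : ℕ) : ℤ) - 1 - 2 * (j : ℤ)) := by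
    intro j
    rw [← zpow_one_add₀ hne]
    congr 1
    push_cast
    ring
  have e2 : ∀ j : ℕ, (qpar N)⁻¹ * qpar N ^ (((n + 1 : ℕ) : ℤ) - 1 - 2 * (j : ℤ))
      = qpar N ^ ((n : ℤ) - 1 - 2 * (j : ℤ)) := by
    intro j
    rw [← zpow_neg_one, ← zpow_add₀ hne]
    congr 1
    push_cast
    ring
  simp only [e1, e2]
  have e3 : (((n + 2 : ℕ) : ℤ) - 1 - 2 * ((n + 1 : ℕ) : ℤ)) = (n : ℤ) - 1 - 2 * (n : ℤ) := by
    push_cast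
    ring
  rw [e3]
  ring

/-- `f N = N ^ e * (1 + O(1/N))`. -/
def Gd (f : ℕ → ℝ) (e : ℤ) : Prop :=
  (fun N : ℕ => f N * (N : ℝ) ^ (-e) - 1) =O[atTop] fun N : ℕ => (N : ℝ)⁻¹

theorem inv_tendsto : Tendsto (fun N : ℕ => (N : ℝ)⁻¹) atTop (nhds 0) :=
  tendsto_inv_atTop_zero.comp tendsto_natCast_atTop_atTop

theorem Gd.tendsto {f : ℕ → ℝ} {e : ℤ} (h : Gd f e) :
    Tendsto (fun N : ℕ => f N * (N : ℝ) ^ (-e)) atTop (nhds 1) := by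
  have := (h.trans_tendsto inv_tendsto).add_const 1
  simpa using this

theorem Gd.mul {f g : ℕ → ℝ} {d e : ℤ} (hf : Gd f d) (hg : Gd g e) :
    Gd (fun N => f N * g N) (d + e) := by
  have h1 := (hf.tendsto.isBigO_one ℝ).mul hg
  have h2 := h1.add (by simpa [Gd] using hf : (fun N : ℕ => f N * (N : ℝ) ^ (-d) - 1) =O[atTop]
    fun N : ℕ => (1 : ℝ) * (N : ℝ)⁻¹)
  simp only [one_mul] at h2
  refine h2.congr' ?_ EventuallyEq.rfl
  filter_upwards [eventually_gt_atTop 0] with N hN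
  have : (N : ℝ) ≠ 0 := by positivity
  rw [neg_add, zpow_add₀ this]
  ring

theorem Gd.inv {f : ℕ → ℝ} {d : ℤ} (hf : Gd f d) : Gd (fun N => (f N)⁻¹) (-d) := by
  have ht := hf.tendsto
  have h1 := ((ht.inv₀ one_ne_zero).isBigO_one ℝ).mul hf.neg_left
  simp only [one_mul] at h1
  refine h1.congr' ?_ EventuallyEq.rfl
  filter_upwards [ht.eventually_ne one_ne_zero] with N hN
  have e : (f N)⁻¹ * (N : ℝ) ^ (- -d) = (f N * (N : ℝ) ^ (-d))⁻¹ := by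
    rw [mul_inv, zpow_neg _ (-d)]
  rw [e, mul_neg, mul_sub, inv_mul_cancel₀ hN]
  ring

theorem Gd.pow (r : ℕ) : Gd (fun N => (N : ℝ) ^ r) r := by
  unfold Gd
  refine (isBigO_zero _ _).congr' ?_ EventuallyEq.rfl
  filter_upwards [eventually_gt_atTop 0] with N hN
  have : (N : ℝ) ≠ 0 := by positivity
  rw [← zpow_natCast, ← zpow_add₀ this]
  simp

theorem qint_one (N : ℕ) : qint N 1 = 1 := by simp [qint]

theorem Gd.qint_pair (n : ℕ) :
    Gd (fun N => qint N (n + 1)) n ∧ Gd (fun N => qint N (n + 2)) (n + 1 : ℕ) := by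
  induction n with
  | zero =>
    constructor
    · simpa [qint_one] using Gd.pow 0
    · refine (Gd.pow 1).congr' ?_ EventuallyEq.rfl
      filter_upwards [eventually_ge_atTop 2] with N hN
      rw [qint_rec N 0 hN]
      simp [qint]
  | succ n ih =>
    refine ⟨ih.2, ?_⟩
    have hb : (fun N : ℕ => (N : ℝ)⁻¹) =O[atTop] fun _ : ℕ => (1 : ℝ) :=
      inv_tendsto.isBigO_one ℝ
    have h1 := ((ih.1.tendsto.isBigO_one ℝ).mul hb).mul
      (isBigO_refl (fun N : ℕ => (N : ℝ)⁻¹) atTop)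
    simp only [one_mul] at h1
    have h2 := IsBigO.sub ih.2 h1
    refine h2.congr' ?_ EventuallyEq.rfl
    filter_upwards [eventually_ge_atTop 2] with N hN
    have : (N : ℝ) ≠ 0 := by positivity
    rw [qint_rec N (n + 1) hN]
    simp only [zpow_neg, zpow_natCast]
    field_simp
    ring

/-- Exponent of the quantum factorial. -/
def ex (n : ℕ) : ℤ := ∑ i ∈ Finset.range n, (i : ℤ)

theorem Gd.qfact (n : ℕ) : Gd (fun N => qfact N n) (ex n) := by
  induction n with
  | zero => simpa [_root_.qfact, ex] using Gd.pow 0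
  | succ n ih =>
    have := ih.mul (Gd.qint_pair n).1
    simpa [_root_.qfact, ex, Finset.prod_range_succ, Finset.sum_range_succ] using this

theorem two_ex (n : ℕ) : 2 * ex n = n * (n - 1) := by
  induction n with
  | zero => simp [ex]
  | succ n ih =>
    have : ex (n + 1) = ex n + n := by simp [ex, Finset.sum_range_succ]
    rw [this, mul_add, ih]
    push_cast
    ring

theorem abs_sqrt_sub_one_le (x : ℝ) : |Real.sqrt x - 1| ≤ |x - 1| := by
  rcases le_total 0 x with h | h
  · have hs := Real.sqrt_nonneg x
    have : x - 1 = (Real.sqrt x - 1) * (Real.sqrt x + 1) := by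
      nlinarith [Real.sq_sqrt h]
    rw [this, abs_mul, abs_of_nonneg (by linarith : 0 ≤ Real.sqrt x + 1)]
    nlinarith [abs_nonneg (Real.sqrt x - 1)]
  · rw [Real.sqrt_eq_zero_of_nonpos h, abs_of_nonpos (by linarith : x - 1 ≤ 0)]
    norm_num
    linarith

/-- For an admissible triple `(l,m,k)` with `r = (l+m−k)/2`, as `N → ∞` one has
`|√(([k+1]_q·N^r)/θ_q(k,l,m)) − 1| = O(N^{−1})`. -/
theorem sqrt_ratio_sub_one_asymptotics (k l m r : ℕ)
    (hadm : l + m = k + 2 * r) (hrl : r ≤ l) (hrm : r ≤ m) :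
    (fun N : ℕ =>
        |Real.sqrt ((qint N (k + 1) * (N : ℝ) ^ r) / thetaNet N k l m r) - 1|) =O[atTop]
      fun N : ℕ => (N : ℝ)⁻¹ := by
  obtain ⟨a, rfl⟩ := Nat.exists_eq_add_of_le hrl
  obtain ⟨b, rfl⟩ := Nat.exists_eq_add_of_le hrm
  obtain rfl : k = a + b := by omega
  have hth := (((Gd.qfact r).mul (Gd.qfact a)).mul (Gd.qfact b)).mul (Gd.qfact (a + b + r + 1))
  have hd := (((Gd.qfact (r + a)).mul (Gd.qfact (r + b))).mul (Gd.qfact (a + b))).inv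
  have H := ((Gd.qint_pair (a + b)).1.mul (Gd.pow r)).mul (hth.mul hd).inv
  have he : (((a + b : ℕ) : ℤ) + (r : ℤ)) + -((ex r + ex a + ex b + ex (a + b + r + 1)) +
      -(ex (r + a) + ex (r + b) + ex (a + b))) = 0 := by
    have h1 := two_ex r
    have h2 := two_ex a
    have h3 := two_ex b
    have h4 := two_ex (a + b + r + 1)
    have h5 := two_ex (r + a)
    have h6 := two_ex (r + b)
    have h7 := two_ex (a + b)
    push_cast at *
    linarith
  rw [he] at H
  refine IsBigO.trans (IsBigO.of_bound 1 (Eventually.of_forall fun N => ?_)) H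
  have := abs_sqrt_sub_one_le ((qint N (a + b + 1) * (N : ℝ) ^ r) /
    thetaNet N (a + b) (r + a) (r + b) r)
  rw [Real.norm_eq_abs, abs_abs, Real.norm_eq_abs, one_mul]
  refine this.trans (le_of_eq ?_)
  simp [thetaNet, div_eq_mul_inv]
end

section
/- (Abstract form of the paper's main Theorem.) Fix an admissible triple (l,m,k) with r = (l+m−k)/2, and set t_N := √(θ_{q(N)}(k,l,m)/([k+1]_{q(N)}·N^r)) for each integer N ≥ 2. Suppose that for each N ≥ 2 we are given complex inner product spaces H_N (nontrivial) and K_N, a linear isometry γ_N : H_N → K_N, and an orthogonal projection P_N on K_N such that ‖P_N(γ_N ξ)‖ = t_N·‖ξ‖ for all ξ ∈ H_N. Then t_N ∈ (0,1] for all large N, the maps α_N := t_N⁻¹·P_N∘γ_N are linear isometries, and the operator norms satisfy ‖α_N − γ_N‖ = O(N^{−1}) as N → ∞. -/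
open scoped BigOperators
open Asymptotics Filter

lemma qpar_pos {N : ℕ} (hN : 2 ≤ N) : 0 < qpar N := by
  have h : (2 : ℝ) ≤ N := by exact_mod_cast hN
  have := Real.sqrt_nonneg ((N : ℝ) ^ 2 - 4)
  unfold qpar
  positivity

lemma qpar_le {N : ℕ} (hN : 2 ≤ N) : qpar N ≤ 2 / N := by
  have h : (2 : ℝ) ≤ N := by exact_mod_cast hN
  have := Real.sqrt_nonneg ((N : ℝ) ^ 2 - 4)
  unfold qpar
  apply div_le_div_of_nonneg_left <;> linarith

lemma qpar_le_one {N : ℕ} (hN : 2 ≤ N) : qpar N ≤ 1 := by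
  have h : (2 : ℝ) ≤ N := by exact_mod_cast hN
  refine (qpar_le hN).trans ?_
  rw [div_le_one (by linarith)]
  exact h

lemma qpar_eq {N : ℕ} (hN : 2 ≤ N) : (N : ℝ) = (qpar N)⁻¹ * (1 + qpar N ^ 2) := by
  have h : (2 : ℝ) ≤ N := by exact_mod_cast hN
  have h0 := Real.sqrt_nonneg ((N : ℝ) ^ 2 - 4)
  have h1 : Real.sqrt ((N : ℝ) ^ 2 - 4) ^ 2 = (N : ℝ) ^ 2 - 4 := Real.sq_sqrt (by nlinarith)
  unfold qpar
  set s := Real.sqrt ((N : ℝ) ^ 2 - 4)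
  have : (N : ℝ) + s ≠ 0 := by positivity
  field_simp
  nlinarith

lemma qint_lower {N : ℕ} (hN : 2 ≤ N) (n : ℕ) : (qpar N)⁻¹ ^ n ≤ qint N (n + 1) := by
  have hq := qpar_pos hN
  unfold qint
  have := Finset.single_le_sum
    (f := fun j : ℕ => qpar N ^ (((n + 1 : ℕ) : ℤ) - 1 - 2 * (j : ℤ))) (s := Finset.range (n + 1))
    (fun i _ => by positivity) (Finset.mem_range.2 (Nat.lt_succ_self n))
  refine le_trans (le_of_eq ?_) this
  have e : (((n + 1 : ℕ) : ℤ) - 1 - 2 * (n : ℤ)) = -(n : ℤ) := by push_cast; ring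
  simp only [e, zpow_neg, zpow_natCast, inv_pow]

lemma qint_upper {N : ℕ} (hN : 2 ≤ N) (n : ℕ) :
    qint N (n + 1) * (1 - qpar N ^ 2) ≤ (qpar N)⁻¹ ^ n := by
  have hq := qpar_pos hN
  unfold qint
  rw [Finset.sum_mul]
  have h : ∀ j ∈ Finset.range (n + 1),
      qpar N ^ (((n + 1 : ℕ) : ℤ) - 1 - 2 * (j : ℤ)) * (1 - qpar N ^ 2) =
      (fun j : ℕ => qpar N ^ ((n : ℤ) + 2 - 2 * (j : ℤ))) (j + 1) -
      (fun j : ℕ => qpar N ^ ((n : ℤ) + 2 - 2 * (j : ℤ))) j := by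
    intro j _
    have e1 : (((n + 1 : ℕ) : ℤ) - 1 - 2 * (j : ℤ)) = n - 2 * j := by push_cast; ring
    have e2 : ((n : ℤ) + 2 - 2 * ((j + 1 : ℕ) : ℤ)) = n - 2 * j := by push_cast; ring
    have e3 : ((n : ℤ) + 2 - 2 * (j : ℤ)) = (n - 2 * j) + (2 : ℕ) := by push_cast; ring
    simp only [e1, e2]
    rw [e3, zpow_add₀ hq.ne', zpow_natCast]
    ring
  rw [Finset.sum_congr rfl h,
    Finset.sum_range_sub (fun j : ℕ => qpar N ^ ((n : ℤ) + 2 - 2 * (j : ℤ)))]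
  have e : ((n : ℤ) + 2 - 2 * ((n + 1 : ℕ) : ℤ)) = -(n : ℤ) := by push_cast; ring
  simp only [e, zpow_neg, zpow_natCast, inv_pow]
  exact sub_le_self _ (zpow_pos hq _).le

lemma qint_pos {N : ℕ} (hN : 2 ≤ N) (n : ℕ) : 0 < qint N (n + 1) :=
  lt_of_lt_of_le (pow_pos (inv_pos.2 (qpar_pos hN)) n) (qint_lower hN n)

lemma qfact_pos {N : ℕ} (hN : 2 ≤ N) (n : ℕ) : 0 < qfact N n :=
  Finset.prod_pos fun i _ => qint_pos hN i

lemma one_sub_nonneg {N : ℕ} (hN : 2 ≤ N) : 0 ≤ 1 - qpar N ^ 2 := by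
  have := qpar_pos hN
  have := qpar_le_one hN
  nlinarith

/-- The exponent `n(n-1)/2`. -/
def tri (n : ℕ) : ℕ := ∑ i ∈ Finset.range n, i

lemma tri_succ (n : ℕ) : tri (n + 1) = tri n + n := Finset.sum_range_succ _ _

lemma tri_add (a b : ℕ) : tri (a + b) = tri a + tri b + a * b := by
  induction b with
  | zero => simp [tri]
  | succ b ih => rw [← add_assoc, tri_succ, tri_succ, ih]; ring

lemma qfact_lower {N : ℕ} (hN : 2 ≤ N) (n : ℕ) : (qpar N)⁻¹ ^ tri n ≤ qfact N n := by
  unfold tri qfact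
  rw [← Finset.prod_pow_eq_pow_sum]
  have := qpar_pos hN
  exact Finset.prod_le_prod (fun i _ => by positivity) fun i _ => qint_lower hN i

lemma qfact_upper {N : ℕ} (hN : 2 ≤ N) (n : ℕ) :
    qfact N n * (1 - qpar N ^ 2) ^ n ≤ (qpar N)⁻¹ ^ tri n := by
  unfold tri qfact
  rw [← Finset.prod_pow_eq_pow_sum]
  have h : (1 - qpar N ^ 2) ^ n = ∏ i ∈ Finset.range n, (1 - qpar N ^ 2) := by simp
  rw [h, ← Finset.prod_mul_distrib]
  exact Finset.prod_le_prod
    (fun i _ => mul_nonneg (qint_pos hN i).le (one_sub_nonneg hN)) fun i _ => qint_upper hN i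

lemma npow_upper {N : ℕ} (hN : 2 ≤ N) (r : ℕ) :
    (N : ℝ) ^ r * (1 - qpar N ^ 2) ^ r ≤ (qpar N)⁻¹ ^ r := by
  rw [← mul_pow]
  have h0 := one_sub_nonneg hN
  have hq := qpar_pos hN
  apply pow_le_pow_left₀ (by positivity)
  have e := qpar_eq hN
  have : (N : ℝ) * (1 - qpar N ^ 2) = (qpar N)⁻¹ * (1 - qpar N ^ 4) := by
    nth_rewrite 1 [e]; ring
  rw [this]
  have h4 : 0 ≤ (qpar N)⁻¹ * qpar N ^ 4 := by positivity
  nlinarith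

lemma ratio_lower {N : ℕ} (hN : 2 ≤ N) (a b r : ℕ) :
    (1 - qpar N ^ 2) ^ ((a + r) + (b + r) + (a + b) + 1 + r) ≤
      thetaNet N (a + b) (a + r) (b + r) r / (qint N (a + b + 1) * (N : ℝ) ^ r) := by
  have hq := qpar_pos hN
  have h0 := one_sub_nonneg hN
  have hNpos : (0 : ℝ) < N := by exact_mod_cast (by omega : 0 < N)
  have F := qfact_pos hN
  have I := qint_pos hN (a + b)
  unfold thetaNet
  rw [Nat.add_sub_cancel, Nat.add_sub_cancel, div_div,
    le_div_iff₀ (by have := F (a + r); have := F (b + r); have := F (a + b); positivity)]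
  set u := 1 - qpar N ^ 2
  set p := (qpar N)⁻¹ with hp
  have hp0 : 0 < p := inv_pos.2 hq
  have up : (qfact N (a + r) * u ^ (a + r)) * (qfact N (b + r) * u ^ (b + r)) *
      (qfact N (a + b) * u ^ (a + b)) * (qint N (a + b + 1) * u) * ((N : ℝ) ^ r * u ^ r) ≤
      p ^ tri (a + r) * p ^ tri (b + r) * p ^ tri (a + b) * p ^ (a + b) * p ^ r := by
    have := F (a + r); have := F (b + r); have := F (a + b)
    gcongr
    · exact qfact_upper hN _
    · exact qfact_upper hN _
    · exact qfact_upper hN _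
    · exact qint_upper hN _
    · exact npow_upper hN _
  have lo : p ^ tri r * p ^ tri a * p ^ tri b * p ^ tri (a + b + r + 1) ≤
      qfact N r * qfact N a * qfact N b * qfact N (a + b + r + 1) := by
    have := F r; have := F a; have := F b
    gcongr
    · exact qfact_lower hN _
    · exact qfact_lower hN _
    · exact qfact_lower hN _
    · exact qfact_lower hN _
  have e : p ^ tri (a + r) * p ^ tri (b + r) * p ^ tri (a + b) * p ^ (a + b) * p ^ r =
      p ^ tri r * p ^ tri a * p ^ tri b * p ^ tri (a + b + r + 1) := by
    simp only [← pow_add]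
    congr 1
    rw [tri_succ, tri_add (a + b) r, tri_add a r, tri_add b r, tri_add a b]
    ring
  refine le_trans (le_of_eq ?_) (up.trans (e.le.trans lo))
  ring

lemma ratio_lower' {N : ℕ} (hN : 2 ≤ N) (a b r : ℕ) :
    1 - (((a + r) + (b + r) + (a + b) + 1 + r : ℕ) : ℝ) * 4 * ((N : ℝ)⁻¹) ^ 2 ≤
      thetaNet N (a + b) (a + r) (b + r) r / (qint N (a + b + 1) * (N : ℝ) ^ r) := by
  refine le_trans ?_ (ratio_lower hN a b r)
  have hq := qpar_pos hN
  have h1 := qpar_le_one hN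
  have h2 := qpar_le hN
  set M := (a + r) + (b + r) + (a + b) + 1 + r
  have hb := one_add_mul_le_pow (a := -(qpar N ^ 2)) (by nlinarith) M
  rw [← sub_eq_add_neg] at hb
  refine le_trans ?_ hb
  have h3 : qpar N ^ 2 ≤ 4 * ((N : ℝ)⁻¹) ^ 2 := by
    calc qpar N ^ 2 ≤ (2 / N) ^ 2 := pow_le_pow_left₀ hq.le h2 2
      _ = _ := by ring
  have := mul_le_mul_of_nonneg_left h3 (Nat.cast_nonneg (α := ℝ) M)
  linarith

lemma re_smul_aux {E : Type*} [NormedAddCommGroup E] [InnerProductSpace ℂ E] (c : ℝ) (x y : E) :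
    RCLike.re (inner ℂ (c • x) y : ℂ) = c * RCLike.re (inner ℂ x y : ℂ) := by
  rw [← Complex.coe_smul, inner_smul_left]
  simp

/-- Abstract form of the paper's main theorem.  Fix an admissible triple `(l,m,k)` with
`r = (l+m−k)/2` and set `t_N = √(θ_{q(N)}(k,l,m)/([k+1]_{q(N)}·N^r))`.  Given, for each `N ≥ 2`,
a nontrivial complex inner product space `H N`, a complex inner product space `K N`, a linear
isometry `γ N : H N → K N` and an orthogonal projection `P N` on `K N` with
`‖P N (γ N ξ)‖ = t N · ‖ξ‖` for all `ξ`, the maps `α N := (t N)⁻¹ • (P N ∘ γ N)` are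
linear isometries for all large `N` (with `t N ∈ (0,1]`), and `‖α N − γ N‖ = O(N⁻¹)`. -/
theorem main_theorem_abstract (k l m r : ℕ)
    (hadm : l + m = k + 2 * r) (hrl : r ≤ l) (hrm : r ≤ m)
    (t : ℕ → ℝ)
    (ht : ∀ N : ℕ, t N = Real.sqrt (thetaNet N k l m r / (qint N (k + 1) * (N : ℝ) ^ r)))
    (H K : ℕ → Type*)
    [∀ N, NormedAddCommGroup (H N)] [∀ N, InnerProductSpace ℂ (H N)] [∀ N, Nontrivial (H N)]
    [∀ N, NormedAddCommGroup (K N)] [∀ N, InnerProductSpace ℂ (K N)]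
    (γ : ∀ N, H N →ₗᵢ[ℂ] K N) (P : ∀ N, K N →L[ℂ] K N)
    (hP2 : ∀ N, 2 ≤ N → (P N).comp (P N) = P N)
    (hPsa : ∀ N, 2 ≤ N → ∀ x y : K N, (inner ℂ ((P N) x) y : ℂ) = inner ℂ x ((P N) y))
    (hnorm : ∀ N, 2 ≤ N → ∀ ξ : H N, ‖(P N) ((γ N) ξ)‖ = t N * ‖ξ‖) :
    (∀ᶠ N in atTop, (0 < t N ∧ t N ≤ 1) ∧
      ∀ ξ : H N, ‖((t N)⁻¹ • ((P N).comp (γ N).toContinuousLinearMap)) ξ‖ = ‖ξ‖) ∧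
    (fun N : ℕ =>
        ‖(t N)⁻¹ • ((P N).comp (γ N).toContinuousLinearMap) - (γ N).toContinuousLinearMap‖)
      =O[atTop] fun N : ℕ => (N : ℝ)⁻¹ := by
  obtain ⟨a, rfl⟩ := Nat.exists_eq_add_of_le' hrl
  obtain ⟨b, rfl⟩ := Nat.exists_eq_add_of_le' hrm
  obtain rfl : k = a + b := by omega
  set M : ℕ := (a + r) + (b + r) + (a + b) + 1 + r with hM
  have inner_eq : ∀ N, 2 ≤ N → ∀ x : K N, RCLike.re (inner ℂ ((P N) x) x : ℂ) = ‖(P N) x‖ ^ 2 := by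
    intro N hN x
    have h : (P N) ((P N) x) = (P N) x := DFunLike.congr_fun (hP2 N hN) x
    rw [← h, hPsa N hN, h, inner_self_eq_norm_sq]
  have contr : ∀ N, 2 ≤ N → ∀ x : K N, ‖(P N) x‖ ≤ ‖x‖ := by
    intro N hN x
    have h1 := inner_eq N hN x
    have h2 := re_inner_le_norm (𝕜 := ℂ) ((P N) x) x
    rw [h1, sq] at h2
    rcases (norm_nonneg ((P N) x)).eq_or_lt with h | h
    · rw [← h]; exact norm_nonneg x
    · exact le_of_mul_le_mul_left h2 h
  have tle : ∀ N, 2 ≤ N → t N ≤ 1 := by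
    intro N hN
    obtain ⟨ξ, hξ⟩ := exists_ne (0 : H N)
    have h1 := contr N hN (γ N ξ)
    rw [hnorm N hN, (γ N).norm_map] at h1
    have : 0 < ‖ξ‖ := norm_pos_iff.2 hξ
    exact le_of_mul_le_mul_right (by linarith) this
  have tpos : ∀ N, 2 ≤ N → 0 < t N := by
    intro N hN
    have hNpos : (0 : ℝ) < N := by exact_mod_cast (by omega : 0 < N)
    rw [ht, Real.sqrt_pos]
    have I := qint_pos hN (a + b)
    unfold thetaNet
    have F := qfact_pos hN
    have := F r; have := F (a + r); have := F (b + r); have := F (a + b)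
    have := F (a + r - r); have := F (b + r - r); have := F (a + b + r + 1)
    positivity
  have tsq : ∀ N : ℕ, 2 ≤ N → 1 - (M : ℝ) * 4 * ((N : ℝ)⁻¹) ^ 2 ≤ t N ^ 2 := by
    intro N hN
    have h := tpos N hN
    rw [ht, Real.sqrt_pos] at h
    rw [ht, Real.sq_sqrt h.le]
    exact ratio_lower' hN a b r
  refine ⟨?_, ?_⟩
  · filter_upwards [eventually_ge_atTop 2] with N hN
    refine ⟨⟨tpos N hN, tle N hN⟩, fun ξ => ?_⟩
    have h := tpos N hN
    have e : ((t N)⁻¹ • ((P N).comp (γ N).toContinuousLinearMap)) ξ =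
      (t N)⁻¹ • (P N) (γ N ξ) := rfl
    rw [e, norm_smul, hnorm N hN, norm_inv, Real.norm_of_nonneg h.le, inv_mul_cancel_left₀ h.ne']
  · refine IsBigO.of_bound (Real.sqrt (8 * M)) ?_
    filter_upwards [eventually_ge_atTop 2] with N hN
    have h := tpos N hN
    have h1 := tle N hN
    rw [norm_norm]
    refine ContinuousLinearMap.opNorm_le_bound _ (by positivity) fun ξ => ?_
    have e : ((t N)⁻¹ • ((P N).comp (γ N).toContinuousLinearMap) -
      (γ N).toContinuousLinearMap) ξ = (t N)⁻¹ • (P N) (γ N ξ) - γ N ξ := rfl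
    rw [e]
    refine (pow_le_pow_iff_left₀ (norm_nonneg _) (by positivity) two_ne_zero).1 ?_
    have hs : RCLike.re (inner ℂ ((t N)⁻¹ • (P N) (γ N ξ)) (γ N ξ) : ℂ) = t N * ‖ξ‖ ^ 2 := by
      rw [re_smul_aux, inner_eq N hN, hnorm N hN]
      field_simp
    rw [@norm_sub_sq ℂ, hs, norm_smul, hnorm N hN, norm_inv, Real.norm_of_nonneg h.le,
      inv_mul_cancel_left₀ h.ne', (γ N).norm_map, mul_pow, mul_pow, Real.sq_sqrt (by positivity),
      norm_inv, Real.norm_of_nonneg (Nat.cast_nonneg N)]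
    have h2 := tsq N hN
    have h3 : 2 - 2 * t N ≤ 8 * M * ((N : ℝ)⁻¹) ^ 2 := by nlinarith
    nlinarith [mul_le_mul_of_nonneg_right h3 (sq_nonneg ‖ξ‖)]
end
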